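/- For all real numbers α, δ and every i ∈ {1,2,3}: Σ_{s=1}^7 γ(e_s)[(α/2)γ(e_s)ψ_i + ((α−δ)/2) Σ_{p=1}^3 η_p(e_s)(Φ_p·ψ_i)] = −((2α+5δ)/2) ψ_i. (Equivalently, each auxiliary spinor, viewed as an 𝓗-Killing spinor in dimension 7, is an eigenspinor of the Riemannian Dirac operator with eigenvalue −(2α+5δ)/2.) -/

import Mathlib

noncomputable section

/- Context: the spin representation in dimension 7, realized on
`Σ = Λ^•(ℂ³)`, modelled as `Finset (Fin 3) → ℂ` (coefficients with respect to
the orthonormal basis of monomials `y_{i₁} ∧ ⋯ ∧ y_{i_k}`, `i₁ < ⋯ < i_k`).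
`cOp j` is wedging with `y_j`, `aOp j` is its adjoint, and `γ` is the Clifford
multiplication of `ℝ⁷` determined by
`γ(e₁) = i` on even-degree and `-i` on odd-degree elements,
`γ(e_{2j}) = i(a_j + c_j)`, `γ(e_{2j+1}) = c_j - a_j`.
Indices of `e₁,…,e₇` (resp. `y₁,y₂,y₃`) are shifted to `Fin 7` (resp. `Fin 3`),
so `e_s` is `estd (s-1)` and `y_j` corresponds to `j-1 : Fin 3`. -/

open Complex

/-- The spinor module `Σ = Λ^•(ℂ³)`, as coefficient functions on the monomial
basis indexed by subsets of `{1,2,3}`. -/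
abbrev SpinorRep := Finset (Fin 3) → ℂ

/-- The sign `(-1)^{#{i ∈ S | i < j}}` arising when wedging `y_j` into the
monomial indexed by `S`. -/
def csign (j : Fin 3) (S : Finset (Fin 3)) : ℂ := (-1 : ℂ) ^ (S.filter (· < j)).card

/-- Creation operator `c_j`: wedge product with `y_j`. -/
def cOp (j : Fin 3) : SpinorRep →ₗ[ℂ] SpinorRep where
  toFun ψ := fun S => if j ∈ S then csign j S * ψ (S.erase j) else 0
  map_add' ψ χ := by
    funext S
    by_cases h : j ∈ S <;> simp [h, mul_add]
  map_smul' c ψ := by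
    funext S
    by_cases h : j ∈ S <;> simp [h] <;> ring

/-- Annihilation operator `a_j = c_j^*`: the adjoint of `c_j` with respect to
the Hermitian inner product making the monomials orthonormal. -/
def aOp (j : Fin 3) : SpinorRep →ₗ[ℂ] SpinorRep where
  toFun ψ := fun S => if j ∈ S then 0 else csign j S * ψ (insert j S)
  map_add' ψ χ := by
    funext S
    by_cases h : j ∈ S <;> simp [h, mul_add]
  map_smul' c ψ := by
    funext S
    by_cases h : j ∈ S <;> simp [h] <;> ring

/-- `γ(e₁)`: multiplication by `i` on even-degree and by `-i` on odd-degree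
elements. -/
def parityOp : SpinorRep →ₗ[ℂ] SpinorRep where
  toFun ψ := fun S => (if Even S.card then I else -I) * ψ S
  map_add' ψ χ := by funext S; simp [mul_add]
  map_smul' c ψ := by funext S; simp; ring

/-- Clifford multiplication by the standard basis vectors `e₁,…,e₇` of `ℝ⁷`. -/
def gammaBasis : Fin 7 → (SpinorRep →ₗ[ℂ] SpinorRep)
  | 0 => parityOp
  | 1 => I • (aOp 0 + cOp 0)
  | 2 => cOp 0 - aOp 0
  | 3 => I • (aOp 1 + cOp 1)
  | 4 => cOp 1 - aOp 1
  | 5 => I • (aOp 2 + cOp 2)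
  | 6 => cOp 2 - aOp 2

/-- Clifford multiplication `γ(v)` for `v ∈ ℝ⁷`. -/
def gamma (v : Fin 7 → ℝ) : SpinorRep →ₗ[ℂ] SpinorRep :=
  ∑ s : Fin 7, (v s : ℂ) • gammaBasis s

/-- The index in `Fin 7` of the Reeb direction `ξ_i = e_i`, `i = 1,2,3`. -/
def xiIdx (i : Fin 3) : Fin 7 := ⟨i.val, by omega⟩

/-- The action of the fundamental 2-forms
`Φ₁ = -e^{23} - e^{45} - e^{67}`, `Φ₂ = e^{13} - e^{46} + e^{57}`,
`Φ₃ = -e^{12} - e^{47} - e^{56}` on spinors, via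
`τ·ψ = Σ_{p<q} τ_{pq} γ(e_p)γ(e_q)ψ`. -/
def PhiOp : Fin 3 → (SpinorRep →ₗ[ℂ] SpinorRep)
  | 0 => -(gammaBasis 1 ∘ₗ gammaBasis 2) - gammaBasis 3 ∘ₗ gammaBasis 4
         - gammaBasis 5 ∘ₗ gammaBasis 6
  | 1 => gammaBasis 0 ∘ₗ gammaBasis 2 - gammaBasis 3 ∘ₗ gammaBasis 5
         + gammaBasis 4 ∘ₗ gammaBasis 6
  | 2 => -(gammaBasis 0 ∘ₗ gammaBasis 1) - gammaBasis 3 ∘ₗ gammaBasis 6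
         - gammaBasis 4 ∘ₗ gammaBasis 5

/-- The canonical spinor `ψ₀ = (y₂ ∧ y₃ + i y₁)/√2`. -/
def psi0 : SpinorRep := fun S =>
  if S = ({1, 2} : Finset (Fin 3)) then (Real.sqrt 2 : ℂ)⁻¹
  else if S = ({0} : Finset (Fin 3)) then I * (Real.sqrt 2 : ℂ)⁻¹
  else 0

/-- The auxiliary spinors `ψ_i = ξ_i · ψ₀`, `i = 1,2,3`. -/
def psiAux (i : Fin 3) : SpinorRep := gammaBasis (xiIdx i) psi0

def mkSp (a b c d e f g h : ℂ) : SpinorRep := fun S =>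
  if S = ∅ then a else if S = {0} then b else if S = {1} then c else if S = {0, 1} then d
  else if S = {2} then e else if S = {0, 2} then f else if S = {1, 2} then g else h

theorem finset_cases : ∀ S : Finset (Fin 3), S = ∅ ∨ S = {0} ∨ S = {1} ∨ S = {0, 1} ∨
    S = {2} ∨ S = {0, 2} ∨ S = {1, 2} ∨ S = {0, 1, 2} := by decide

theorem sp_ext {u v : SpinorRep} (h0 : u ∅ = v ∅) (h1 : u {0} = v {0}) (h2 : u {1} = v {1})
    (h3 : u {0, 1} = v {0, 1}) (h4 : u {2} = v {2}) (h5 : u {0, 2} = v {0, 2})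
    (h6 : u {1, 2} = v {1, 2}) (h7 : u {0, 1, 2} = v {0, 1, 2}) : u = v := by
  funext S
  rcases finset_cases S with rfl | rfl | rfl | rfl | rfl | rfl | rfl | rfl <;> assumption

theorem psi0_mk : psi0 = mkSp 0 (I * (Real.sqrt 2 : ℂ)⁻¹) 0 0 0 0 ((Real.sqrt 2 : ℂ)⁻¹) 0 := by
  apply sp_ext <;> simp +decide [psi0, mkSp]

theorem mk_add (a b c d e f g h a2 b2 c2 d2 e2 f2 g2 h2 : ℂ) :
    mkSp a b c d e f g h + mkSp a2 b2 c2 d2 e2 f2 g2 h2 =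
      mkSp (a + a2) (b + b2) (c + c2) (d + d2) (e + e2) (f + f2) (g + g2) (h + h2) := by
  apply sp_ext <;> simp +decide [mkSp]

theorem mk_sub (a b c d e f g h a2 b2 c2 d2 e2 f2 g2 h2 : ℂ) :
    mkSp a b c d e f g h - mkSp a2 b2 c2 d2 e2 f2 g2 h2 =
      mkSp (a - a2) (b - b2) (c - c2) (d - d2) (e - e2) (f - f2) (g - g2) (h - h2) := by
  apply sp_ext <;> simp +decide [mkSp]

theorem mk_neg (a b c d e f g h : ℂ) :
    -mkSp a b c d e f g h = mkSp (-a) (-b) (-c) (-d) (-e) (-f) (-g) (-h) := by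
  apply sp_ext <;> simp +decide [mkSp]

theorem mk_smul (k a b c d e f g h : ℂ) :
    k • mkSp a b c d e f g h =
      mkSp (k * a) (k * b) (k * c) (k * d) (k * e) (k * f) (k * g) (k * h) := by
  apply sp_ext <;> simp +decide [mkSp]

theorem gamma0_mk (a b c d e f g h : ℂ) :
    gammaBasis 0 (mkSp a b c d e f g h) =
      mkSp (I * a) (-(I * b)) (-(I * c)) (I * d) (-(I * e)) (I * f) (I * g) (-(I * h)) := by
  apply sp_ext <;>
    simp +decide [gammaBasis, parityOp, aOp, cOp, csign, mkSp, Finset.filter_insert, Finset.filter_singleton]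

theorem gamma1_mk (a b c d e f g h : ℂ) :
    gammaBasis 1 (mkSp a b c d e f g h) =
      mkSp (I * b) (I * a) (I * d) (I * c) (I * f) (I * e) (I * h) (I * g) := by
  apply sp_ext <;>
    simp +decide [gammaBasis, parityOp, aOp, cOp, csign, mkSp, Finset.filter_insert, Finset.filter_singleton]

theorem gamma2_mk (a b c d e f g h : ℂ) :
    gammaBasis 2 (mkSp a b c d e f g h) =
      mkSp (-b) (a) (-d) (c) (-f) (e) (-h) (g) := by
  apply sp_ext <;>
    simp +decide [gammaBasis, parityOp, aOp, cOp, csign, mkSp, Finset.filter_insert, Finset.filter_singleton]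

theorem gamma3_mk (a b c d e f g h : ℂ) :
    gammaBasis 3 (mkSp a b c d e f g h) =
      mkSp (I * c) (-(I * d)) (I * a) (-(I * b)) (I * g) (-(I * h)) (I * e) (-(I * f)) := by
  apply sp_ext <;>
    simp +decide [gammaBasis, parityOp, aOp, cOp, csign, mkSp, Finset.filter_insert, Finset.filter_singleton]

theorem gamma4_mk (a b c d e f g h : ℂ) :
    gammaBasis 4 (mkSp a b c d e f g h) =
      mkSp (-c) (d) (a) (-b) (-g) (h) (e) (-f) := by
  apply sp_ext <;>
    simp +decide [gammaBasis, parityOp, aOp, cOp, csign, mkSp, Finset.filter_insert, Finset.filter_singleton]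

theorem gamma5_mk (a b c d e f g h : ℂ) :
    gammaBasis 5 (mkSp a b c d e f g h) =
      mkSp (I * e) (-(I * f)) (-(I * g)) (I * h) (I * a) (-(I * b)) (-(I * c)) (I * d) := by
  apply sp_ext <;>
    simp +decide [gammaBasis, parityOp, aOp, cOp, csign, mkSp, Finset.filter_insert, Finset.filter_singleton]

theorem gamma6_mk (a b c d e f g h : ℂ) :
    gammaBasis 6 (mkSp a b c d e f g h) =
      mkSp (-e) (f) (g) (-h) (a) (-b) (-c) (d) := by
  apply sp_ext <;>
    simp +decide [gammaBasis, parityOp, aOp, cOp, csign, mkSp, Finset.filter_insert, Finset.filter_singleton]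

theorem gammaBasis_sq (s : Fin 7) (a b c d e f g h : ℂ) :
    gammaBasis s (gammaBasis s (mkSp a b c d e f g h)) = -mkSp a b c d e f g h := by
  have hI (z : ℂ) : I * (I * z) = -z := by rw [← mul_assoc, I_mul_I, neg_one_mul]
  fin_cases s <;>
    simp [gamma0_mk, gamma1_mk, gamma2_mk, gamma3_mk, gamma4_mk, gamma5_mk, gamma6_mk, mk_neg, hI]

theorem psiAux_mk (i : Fin 3) : ∃ a b c d e f g h : ℂ, psiAux i = mkSp a b c d e f g h := by
  fin_cases i <;>
    simp only [psiAux, xiIdx, psi0_mk]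
  · exact ⟨_, _, _, _, _, _, _, _, gamma0_mk ..⟩
  · exact ⟨_, _, _, _, _, _, _, _, gamma1_mk ..⟩
  · exact ⟨_, _, _, _, _, _, _, _, gamma2_mk ..⟩

theorem phi_sum (i : Fin 3) :
    gammaBasis 0 (PhiOp 0 (psiAux i)) + gammaBasis 1 (PhiOp 1 (psiAux i)) +
      gammaBasis 2 (PhiOp 2 (psiAux i)) = (5 : ℂ) • psiAux i := by
  have hI (z : ℂ) : I * (I * z) = -z := by rw [← mul_assoc, I_mul_I, neg_one_mul]
  fin_cases i <;>
    simp [psiAux, xiIdx, psi0_mk, PhiOp, gamma0_mk, gamma1_mk, gamma2_mk, gamma3_mk, gamma4_mk,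
      gamma5_mk, gamma6_mk, mk_neg, mk_add, mk_sub, mk_smul, hI] <;>
    congr 1 <;> ring_nf <;> simp only [I_sq] <;> ring

/-- For all `α, δ ∈ ℝ` and `i ∈ {1,2,3}`:
`Σ_{s=1}^7 γ(e_s)[(α/2)γ(e_s)ψ_i + ((α-δ)/2) Σ_{p=1}^3 η_p(e_s)(Φ_p·ψ_i)]
  = -((2α+5δ)/2) ψ_i`,
i.e. each auxiliary spinor, viewed as an `𝓗`-Killing spinor in dimension 7, is
a Dirac eigenspinor with eigenvalue `-(2α+5δ)/2`. -/
theorem statement_16 (α δ : ℝ) (i : Fin 3) :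
    ∑ s : Fin 7,
      gammaBasis s
        (((α / 2 : ℝ) : ℂ) • gammaBasis s (psiAux i)
          + (((α - δ) / 2 : ℝ) : ℂ) •
              ∑ p : Fin 3,
                ((if xiIdx p = s then (1 : ℝ) else 0 : ℝ) : ℂ) • PhiOp p (psiAux i))
    = ((-((2 * α + 5 * δ) / 2) : ℝ) : ℂ) • psiAux i := by
  have hsq : ∀ s, gammaBasis s (gammaBasis s (psiAux i)) = -psiAux i := by
    intro s
    obtain ⟨a, b, c, d, e, f, g, h, hψ⟩ := psiAux_mk i
    rw [hψ, gammaBasis_sq]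
  have hx0 : xiIdx 0 = 0 := rfl
  have hx1 : xiIdx 1 = 1 := rfl
  have hx2 : xiIdx 2 = 2 := rfl
  have hphi := phi_sum i
  have key : ∑ s : Fin 7, gammaBasis s (∑ p : Fin 3,
      ((if xiIdx p = s then (1 : ℝ) else 0 : ℝ) : ℂ) • PhiOp p (psiAux i)) =
      (5 : ℂ) • psiAux i := by
    rw [← hphi]
    simp +decide [Fin.sum_univ_succ, hx0, hx1, hx2]
    exact (add_assoc _ _ _).symm
  simp only [map_add, map_smul, hsq, Finset.sum_add_distrib, ← Finset.smul_sum, key]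
  simp only [Finset.sum_const, Finset.card_univ, Fintype.card_fin]
  funext S
  simp
  ring
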